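/- Let (G, G⁺, Δ) be an LCM-Garside structure. Then the support of an element of G is well defined: (i) if a positive element a ∈ G⁺ is written in two ways a = x₁⋯x_r = y₁⋯y_s as products of atoms, then the closure of {x₁,…,x_r} equals the closure of {y₁,…,y_s}; (ii) for x ∈ G with reduced left-fraction decomposition x = a⁻¹b, the closure of the union of the set of atoms appearing in an atom factorization of a with the set of atoms appearing in an atom factorization of b does not depend on the chosen factorizations. -/

import Mathlib

open scoped Pointwise Classical

/-- A Garside structure on a group `G`: a submonoid `pos` of positive elements with
trivial units, prefix and suffix lattice operations, and a Garside element `delta`. -/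
structure GarsideStructure (G : Type*) [Group G] where
  /-- the submonoid of positive elements -/
  pos : Submonoid G
  /-- the Garside element Δ -/
  delta : G
  /-- meet for the prefix order -/
  meet : G → G → G
  /-- join for the prefix order -/
  join : G → G → G
  /-- meet for the suffix order -/
  rmeet : G → G → G
  /-- join for the suffix order -/
  rjoin : G → G → G
  units_triv : ∀ a : G, a ∈ pos → a⁻¹ ∈ pos → a = 1
  meet_le_left : ∀ a b : G, (meet a b)⁻¹ * a ∈ pos
  meet_le_right : ∀ a b : G, (meet a b)⁻¹ * b ∈ pos
  le_meet : ∀ a b c : G, c⁻¹ * a ∈ pos → c⁻¹ * b ∈ pos → c⁻¹ * meet a b ∈ pos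
  le_join_left : ∀ a b : G, a⁻¹ * join a b ∈ pos
  le_join_right : ∀ a b : G, b⁻¹ * join a b ∈ pos
  join_le : ∀ a b c : G, a⁻¹ * c ∈ pos → b⁻¹ * c ∈ pos → (join a b)⁻¹ * c ∈ pos
  rmeet_le_left : ∀ a b : G, a * (rmeet a b)⁻¹ ∈ pos
  rmeet_le_right : ∀ a b : G, b * (rmeet a b)⁻¹ ∈ pos
  le_rmeet : ∀ a b c : G, a * c⁻¹ ∈ pos → b * c⁻¹ ∈ pos → rmeet a b * c⁻¹ ∈ pos
  rjoin_le_left : ∀ a b : G, rjoin a b * a⁻¹ ∈ pos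
  rjoin_le_right : ∀ a b : G, rjoin a b * b⁻¹ ∈ pos
  rjoin_le : ∀ a b c : G, c * a⁻¹ ∈ pos → c * b⁻¹ ∈ pos → c * (rjoin a b)⁻¹ ∈ pos
  delta_pos : delta ∈ pos
  /-- Δ is balanced: its positive prefixes coincide with its positive suffixes -/
  delta_balanced : ∀ s : G, s ∈ pos → (s⁻¹ * delta ∈ pos ↔ delta * s⁻¹ ∈ pos)
  /-- the set of simple elements (divisors of Δ) is finite -/
  divDelta_finite : {s : G | s ∈ pos ∧ s⁻¹ * delta ∈ pos}.Finite
  /-- the simple elements generate `G` -/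
  divDelta_generates : Subgroup.closure {s : G | s ∈ pos ∧ s⁻¹ * delta ∈ pos} = ⊤
  /-- the atoms generate the positive monoid -/
  atoms_generate :
    Submonoid.closure {a : G | a ∈ pos ∧ a ≠ 1 ∧
      ∀ b ∈ pos, b⁻¹ * a ∈ pos → b = 1 ∨ b = a} = pos
  /-- every atom divides Δ -/
  atoms_divide_delta : ∀ a : G, a ∈ pos → a ≠ 1 →
    (∀ b ∈ pos, b⁻¹ * a ∈ pos → b = 1 ∨ b = a) → a⁻¹ * delta ∈ pos
  /-- every element is bounded below and above by powers of Δ -/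
  delta_bounds : ∀ x : G, ∃ p q : ℤ, p ≤ q ∧ (delta ^ p)⁻¹ * x ∈ pos ∧ x⁻¹ * delta ^ q ∈ pos
  /-- conjugation by Δ maps the positive monoid bijectively onto itself -/
  conj_delta : ∀ a : G, a ∈ pos ↔ delta * a * delta⁻¹ ∈ pos
  /-- some positive power of Δ is central -/
  central_power : ∃ n : ℕ, 0 < n ∧ delta ^ n ∈ Subgroup.center G
  /-- no infinite strictly decreasing (for the prefix order) sequence of positive elements -/
  no_infinite_descent : ¬ ∃ f : ℕ → G, (∀ n, f n ∈ pos) ∧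
    ∀ n, (f (n + 1))⁻¹ * f n ∈ pos ∧ f (n + 1) ≠ f n

namespace GarsideStructure

variable {G : Type*} [Group G] (S : GarsideStructure G)

/-- the prefix order: `a ≼ b` iff `a⁻¹ * b` is positive -/
def le (a b : G) : Prop := a⁻¹ * b ∈ S.pos

/-- the set of positive prefixes of an element -/
def Div (d : G) : Set G := {s : G | s ∈ S.pos ∧ S.le s d}

/-- atoms: nontrivial positive elements with no nontrivial proper positive prefix -/
def IsAtomic (a : G) : Prop :=
  a ∈ S.pos ∧ a ≠ 1 ∧ ∀ b ∈ S.pos, S.le b a → b = 1 ∨ b = a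

/-- the set of atoms -/
def atoms : Set G := {a : G | S.IsAtomic a}

/-- the left denominator of `x`: `D_L x = (1 ∧ x)⁻¹` -/
def DL (x : G) : G := (S.meet 1 x)⁻¹

/-- the left numerator of `x`: `N_L x = D_L x * x` -/
def NL (x : G) : G := S.DL x * x

/-- the (left) swap `φ(x) = N_L x * (D_L x)⁻¹ = D_L x * x * (D_L x)⁻¹` -/
def swap (x : G) : G := S.DL x * x * (S.DL x)⁻¹

/-- an element is recurrent if it is fixed by some positive iterate of the swap map -/
def Recurrent (x : G) : Prop := ∃ m : ℕ, 0 < m ∧ S.swap^[m] x = x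

/-- the set `R(x)` of recurrent conjugates of `x` -/
def Rset (x : G) : Set G := {y : G | IsConj x y ∧ S.Recurrent y}

/-- the set `C⁺(x)` of positive conjugates of `x` -/
def Cpos (x : G) : Set G := {y : G | IsConj x y ∧ y ∈ S.pos}

/-- the set `C⁻(x)` of negative conjugates of `x` -/
def Cneg (x : G) : Set G := {y : G | IsConj x y ∧ y⁻¹ ∈ S.pos}

/-- the transport of `u` at `y`: with `y = a⁻¹ b` reduced, `u^{(1)} = (a u) ∧ (b u)` -/
def transport (y u : G) : G := S.meet (S.DL y * u) (S.NL y * u)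

/-- `Δ_X`: the least upper bound for the prefix order of a set `X` (`1` if there is none) -/
noncomputable def deltaOf (X : Set G) : G :=
  if h : ∃ d : G, (∀ x ∈ X, S.le x d) ∧ ∀ c : G, (∀ x ∈ X, S.le x c) → S.le d c
  then h.choose else 1

/-- the closure `X̄ = Div(Δ_X) ∩ 𝒜` of a set of atoms -/
noncomputable def closureOf (X : Set G) : Set G := S.Div (S.deltaOf X) ∩ S.atoms

/-- the subgroup `G_X` generated by the closure of `X` -/
noncomputable def GX (X : Set G) : Subgroup G := Subgroup.closure (S.closureOf X)

/-- the support of an element: the closure of the set of atoms appearing in atom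
factorizations of its left denominator and left numerator -/
noncomputable def supp (x : G) : Set G :=
  if h : ∃ p : List G × List G,
      (∀ a ∈ p.1, a ∈ S.atoms) ∧ (∀ a ∈ p.2, a ∈ S.atoms) ∧
      p.1.prod = S.DL x ∧ p.2.prod = S.NL x
  then S.closureOf ({a : G | a ∈ h.choose.1} ∪ {a : G | a ∈ h.choose.2})
  else ∅

/-- an LCM-Garside structure -/
structure IsLCM : Prop where
  delta_eq : S.delta = S.deltaOf S.atoms
  balanced : ∀ X ⊆ S.atoms, ∀ s ∈ S.pos,
    (S.le s (S.deltaOf X) ↔ S.deltaOf X * s⁻¹ ∈ S.pos)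
  div_eq : ∀ X ⊆ S.atoms,
    S.Div (S.deltaOf X) = S.Div S.delta ∩ {g : G | g ∈ S.GX X ∧ g ∈ S.pos}
  factor_closed : ∀ X ⊆ S.atoms, ∀ g : G, g ∈ S.GX X → g ∈ S.pos →
    ∀ a b : G, a ∈ S.pos → b ∈ S.pos → g = a * b → a ∈ S.GX X ∧ b ∈ S.GX X
  lattice_closed : ∀ X ⊆ S.atoms, ∀ a b : G, a ∈ S.GX X → b ∈ S.GX X →
    S.meet a b ∈ S.GX X ∧ S.join a b ∈ S.GX X
  fraction_closed : ∀ X ⊆ S.atoms, ∀ g : G, g ∈ S.GX X →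
    S.DL g ∈ S.GX X ∧ S.NL g ∈ S.GX X

/-- a standard parabolic subgroup: the subgroup generated by a saturated set of atoms -/
noncomputable def IsStandardParabolic (H : Subgroup G) : Prop :=
  ∃ X : Set G, X ⊆ S.atoms ∧ S.closureOf X = X ∧ H = S.GX X

/-- a parabolic subgroup: a conjugate of a standard parabolic subgroup -/
noncomputable def IsParabolic (H : Subgroup G) : Prop :=
  ∃ (P : Subgroup G) (c : G), S.IsStandardParabolic P ∧
    H = Subgroup.map (MulAut.conj c).toMonoidHom P

/-- the structure is support-preserving if conjugations between positive elements
conjugate the corresponding parabolic subgroups of the supports -/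
noncomputable def SupportPreserving : Prop :=
  ∀ y ∈ S.pos, ∀ z ∈ S.pos, ∀ α : G, α⁻¹ * y * α = z →
    Subgroup.map (MulAut.conj α⁻¹).toMonoidHom (S.GX (S.supp y)) = S.GX (S.supp z)

/-- `P` is the parabolic closure of `x` -/
noncomputable def IsParabolicClosure (x : G) (P : Subgroup G) : Prop :=
  S.IsParabolic P ∧ x ∈ P ∧ ∀ H : Subgroup G, S.IsParabolic H → x ∈ H → P ≤ H

end GarsideStructure


namespace GarsideStructure

variable {G : Type*} [Group G] {S : GarsideStructure G}

theorem le_trans {a b c : G} (hab : S.le a b) (hbc : S.le b c) : S.le a c := by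
  have h := S.pos.mul_mem hab hbc
  rwa [show a⁻¹ * b * (b⁻¹ * c) = a⁻¹ * c by group] at h

theorem atom_mem_div_delta {a : G} (ha : a ∈ S.atoms) : a ∈ S.Div S.delta :=
  ⟨ha.1, S.atoms_divide_delta a ha.1 ha.2.1 ha.2.2⟩

theorem finite_of_subset_atoms {X : Set G} (hX : X ⊆ S.atoms) : X.Finite :=
  S.divDelta_finite.subset fun _ hx => atom_mem_div_delta (hX hx)

theorem exists_lub {X : Set G} (hX : X.Finite) (hne : X.Nonempty) :
    ∃ d : G, (∀ x ∈ X, S.le x d) ∧ ∀ c : G, (∀ x ∈ X, S.le x c) → S.le d c := by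
  induction X, hX using Set.Finite.induction_on with
  | empty => exact absurd hne Set.not_nonempty_empty
  | @insert a s _ _ ih =>
    rcases s.eq_empty_or_nonempty with rfl | hs
    · refine ⟨a, ?_, fun c hc => hc a (Set.mem_insert a _)⟩
      rintro x (rfl | hx)
      · simp [le]
      · exact absurd hx (Set.notMem_empty x)
    · obtain ⟨d, hd, hmin⟩ := ih hs
      refine ⟨S.join a d, ?_, fun c hc => S.join_le a d c (hc a (Set.mem_insert a s))
        (hmin c fun x hx => hc x (Set.mem_insert_of_mem a hx))⟩
      rintro x (rfl | hx)
      · exact S.le_join_left x d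
      · exact le_trans (hd x hx) (S.le_join_right a d)

theorem le_deltaOf {X : Set G} (hX : X ⊆ S.atoms) {x : G} (hx : x ∈ X) :
    S.le x (S.deltaOf X) := by
  have h := S.exists_lub (finite_of_subset_atoms hX) ⟨x, hx⟩
  rw [deltaOf, dif_pos h]
  exact h.choose_spec.1 x hx

theorem deltaOf_le {X : Set G} {c : G} (hc : S.le 1 c) (h : ∀ x ∈ X, S.le x c) :
    S.le (S.deltaOf X) c := by
  unfold deltaOf
  split_ifs with hlub
  · exact hlub.choose_spec.2 c h
  · exact hc

theorem subset_closureOf {X : Set G} (hX : X ⊆ S.atoms) : X ⊆ S.closureOf X :=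
  fun _ hx => ⟨⟨(hX hx).1, le_deltaOf hX hx⟩, hX hx⟩

theorem list_prod_mem_pos {l : List G} (hl : ∀ b ∈ l, b ∈ S.atoms) : l.prod ∈ S.pos :=
  list_prod_mem fun b hb => (hl b hb).1

theorem list_prod_mem_GX {X : Set G} (hX : X ⊆ S.atoms) {l : List G} (hl : ∀ b ∈ l, b ∈ X) :
    l.prod ∈ S.GX X :=
  list_prod_mem fun b hb => Subgroup.subset_closure (subset_closureOf hX (hl b hb))

/-- The atoms of any factorization of a positive element of `G_X` lie in `G_X`. -/
theorem IsLCM.mem_GX_of_list_prod_mem (hS : S.IsLCM) {X : Set G} (hX : X ⊆ S.atoms) {l : List G}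
    (hl : ∀ b ∈ l, b ∈ S.atoms) (h : l.prod ∈ S.GX X) : ∀ b ∈ l, b ∈ S.GX X := by
  induction l with
  | nil => simp
  | cons a t ih =>
    have ht : ∀ b ∈ t, b ∈ S.atoms := fun b hb => hl b (List.mem_cons_of_mem a hb)
    obtain ⟨ha, hprod⟩ := hS.factor_closed X hX _ h (list_prod_mem_pos hl) a t.prod
      (hl a List.mem_cons_self).1 (list_prod_mem_pos ht) List.prod_cons
    intro b hb
    rcases List.mem_cons.mp hb with rfl | hb
    · exact ha
    · exact ih ht hprod b hb

theorem IsLCM.closureOf_subset (hS : S.IsLCM) {X Y : Set G} (hX : X ⊆ S.atoms)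
    (hY : Y ⊆ S.atoms) (h : ∀ y ∈ Y, y ∈ S.GX X) : S.closureOf Y ⊆ S.closureOf X := by
  have key : ∀ g ∈ S.Div S.delta, g ∈ S.GX X → S.le g (S.deltaOf X) := fun g hg hgX => by
    have hmem : g ∈ S.Div (S.deltaOf X) := by
      rw [hS.div_eq X hX]
      exact ⟨hg, hgX, hg.1⟩
    exact hmem.2
  have hone : (1 : G) ∈ S.Div S.delta := ⟨S.pos.one_mem, by simpa [le] using S.delta_pos⟩
  have hle : S.le (S.deltaOf Y) (S.deltaOf X) :=
    deltaOf_le (key 1 hone (S.GX X).one_mem)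
      fun y hy => key y (atom_mem_div_delta (hY hy)) (h y hy)
  rintro a ⟨⟨hpos, ha⟩, hatom⟩
  exact ⟨⟨hpos, le_trans ha hle⟩, hatom⟩

theorem IsLCM.closureOf_union_subset (hS : S.IsLCM) {l₁ l₂ l₃ l₄ : List G}
    (h₁ : ∀ b ∈ l₁, b ∈ S.atoms) (h₂ : ∀ b ∈ l₂, b ∈ S.atoms)
    (h₃ : ∀ b ∈ l₃, b ∈ S.atoms) (h₄ : ∀ b ∈ l₄, b ∈ S.atoms)
    (h₁₃ : l₁.prod = l₃.prod) (h₂₄ : l₂.prod = l₄.prod) :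
    S.closureOf ({b : G | b ∈ l₃} ∪ {b : G | b ∈ l₄}) ⊆
      S.closureOf ({b : G | b ∈ l₁} ∪ {b : G | b ∈ l₂}) := by
  have hX : {b : G | b ∈ l₁} ∪ {b : G | b ∈ l₂} ⊆ S.atoms := Set.union_subset h₁ h₂
  refine hS.closureOf_subset hX (Set.union_subset h₃ h₄) ?_
  rintro y (hy | hy)
  · exact hS.mem_GX_of_list_prod_mem hX h₃
      (h₁₃ ▸ list_prod_mem_GX hX fun b hb => Or.inl hb) y hy
  · exact hS.mem_GX_of_list_prod_mem hX h₄
      (h₂₄ ▸ list_prod_mem_GX hX fun b hb => Or.inr hb) y hy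

theorem IsLCM.closureOf_union_eq (hS : S.IsLCM) {l₁ l₂ l₃ l₄ : List G}
    (h₁ : ∀ b ∈ l₁, b ∈ S.atoms) (h₂ : ∀ b ∈ l₂, b ∈ S.atoms)
    (h₃ : ∀ b ∈ l₃, b ∈ S.atoms) (h₄ : ∀ b ∈ l₄, b ∈ S.atoms)
    (h₁₃ : l₁.prod = l₃.prod) (h₂₄ : l₂.prod = l₄.prod) :
    S.closureOf ({b : G | b ∈ l₁} ∪ {b : G | b ∈ l₂}) =
      S.closureOf ({b : G | b ∈ l₃} ∪ {b : G | b ∈ l₄}) :=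
  (hS.closureOf_union_subset h₃ h₄ h₁ h₂ h₁₃.symm h₂₄.symm).antisymm
    (hS.closureOf_union_subset h₁ h₂ h₃ h₄ h₁₃ h₂₄)

end GarsideStructure

/-- in an LCM-Garside structure the support is well defined:
(i) the closure of the set of atoms in an atom factorization of a positive element does
not depend on the factorization; (ii) for an arbitrary element with reduced left-fraction
decomposition `x = a⁻¹b` the closure of the union of the atoms appearing in atom
factorizations of `a` and `b` does not depend on the chosen factorizations. -/
theorem garside_support_well_defined {G : Type*} [Group G]
    (S : GarsideStructure G) (hS : S.IsLCM) :
    (∀ a ∈ S.pos, ∀ l₁ l₂ : List G,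
      (∀ b ∈ l₁, b ∈ S.atoms) → (∀ b ∈ l₂, b ∈ S.atoms) →
      l₁.prod = a → l₂.prod = a →
      S.closureOf {b : G | b ∈ l₁} = S.closureOf {b : G | b ∈ l₂}) ∧
    (∀ x : G, ∀ l₁ l₂ l₃ l₄ : List G,
      (∀ b ∈ l₁, b ∈ S.atoms) → (∀ b ∈ l₂, b ∈ S.atoms) →
      (∀ b ∈ l₃, b ∈ S.atoms) → (∀ b ∈ l₄, b ∈ S.atoms) →
      l₁.prod = S.DL x → l₂.prod = S.NL x → l₃.prod = S.DL x → l₄.prod = S.NL x →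
      S.closureOf ({b : G | b ∈ l₁} ∪ {b : G | b ∈ l₂}) =
        S.closureOf ({b : G | b ∈ l₃} ∪ {b : G | b ∈ l₄})) := by
  refine ⟨fun a _ l₁ l₂ h₁ h₂ e₁ e₂ => ?_, fun x l₁ l₂ l₃ l₄ h₁ h₂ h₃ h₄ e₁ e₂ e₃ e₄ =>
    hS.closureOf_union_eq h₁ h₂ h₃ h₄ (e₁.trans e₃.symm) (e₂.trans e₄.symm)⟩
  have e := e₁.trans e₂.symm
  simpa only [Set.union_self] using hS.closureOf_union_eq h₁ h₁ h₂ h₂ e e
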